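/- arXiv:quant-ph/0610259 — 2 statements merged into one kernel-verified Lean document; each statement's English description precedes it below -/
import Mathlib

section
/- Let K and H i (i : Fin n) be complex Hilbert spaces and T i : H i →L[ℂ] K bounded operators. Then ∑ i, T i ∘ (T i)† ≤ 1 (i.e. the row operator [T 0, …, T (n−1)] is a contraction) if and only if there exist contractions Γ i : H i →L[ℂ] K such that for every k, T k = D_{(Γ 0)†} ∘ D_{(Γ 1)†} ∘ ⋯ ∘ D_{(Γ (k−1))†} ∘ Γ k (the composition over j < k taken in increasing order of j, and T 0 = Γ 0), where D_{(Γ j)†} = √(1 − Γ j ∘ (Γ j)†) : K →L[ℂ] K. -/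
/-!
Write `P m = D 0 ∘ ⋯ ∘ D (m - 1)`. If `T k = P k ∘ Γ k` and `D k ^ 2 = 1 - Γ k ∘ (Γ k)†` for all
`k < m`, then telescoping gives `P m ∘ (P m)† = 1 - ∑ k < m, T k ∘ (T k)†`
(`prefixProd_mul_adjoint`). For `m = n` the left side is positive, so the row operator is a
contraction.

Conversely, suppose the row operator is a contraction and `Γ k`, `D k` are found for `k < m`. The
identity above shows `T m ∘ (T m)† ≤ P m ∘ (P m)†`, since the difference is
`1 - ∑ k ≤ m, T k ∘ (T k)†`. Douglas' factorization lemma (`exists_contraction_factor`) then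
produces a contraction `Γ m` with `T m = P m ∘ Γ m`, and `D m` is the square root of its defect
operator. This step only uses the `D j` with `j < m`, so it iterates.
-/

open ContinuousLinearMap

section Douglas

variable {K L H : Type*} [NormedAddCommGroup K] [InnerProductSpace ℂ K] [CompleteSpace K]
  [NormedAddCommGroup L] [InnerProductSpace ℂ L] [CompleteSpace L]
  [NormedAddCommGroup H] [InnerProductSpace ℂ H] [CompleteSpace H]

lemma re_inner_comp_adjoint_self (A : H →L[ℂ] K) (x : K) :
    RCLike.re (inner ℂ ((A ∘L adjoint A) x) x) = ‖adjoint A x‖ ^ 2 := by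
  rw [comp_apply, ← adjoint_inner_right, inner_self_eq_norm_sq]

/-- **Douglas' factorization lemma**, for contractive factors: if `A A† ≤ B B†` then `A = B C` for
some contraction `C`. The map `B† x ↦ A† x` is well defined and contractive on the range of `B†`;
`C†` is its extension to the closure of that range, set to zero on the orthogonal complement. -/
lemma exists_contraction_factor (A : H →L[ℂ] K) (B : L →L[ℂ] K)
    (h : (B ∘L adjoint B - A ∘L adjoint A).IsPositive) :
    ∃ C : H →L[ℂ] L, ‖C‖ ≤ 1 ∧ A = B ∘L C := by
  have hle : ∀ x, ‖adjoint A x‖ ≤ ‖adjoint B x‖ := fun x => by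
    have hx := h.re_inner_nonneg_left x
    rw [sub_apply, inner_sub_left, map_sub, re_inner_comp_adjoint_self,
      re_inner_comp_adjoint_self] at hx
    exact (sq_le_sq₀ (norm_nonneg _) (norm_nonneg _)).1 (by linarith)
  let S : Submodule ℂ L := (LinearMap.range (adjoint B).toLinearMap).topologicalClosure
  have hS : ∀ x, adjoint B x ∈ S := fun x =>
    Submodule.le_topologicalClosure _ (LinearMap.mem_range_self (adjoint B).toLinearMap x)
  have : CompleteSpace S :=
    (Submodule.isClosed_topologicalClosure _).completeSpace_coe
  let e : K →ₗ[ℂ] S := (adjoint B).toLinearMap.codRestrict S hS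
  have he : DenseRange e := by
    intro y
    rw [closure_subtype]
    have hy := y.2
    rw [← SetLike.mem_coe, Submodule.topologicalClosure_coe] at hy
    refine closure_mono ?_ hy
    rintro _ ⟨x, rfl⟩
    exact ⟨e x, ⟨x, rfl⟩, rfl⟩
  have hbound : ∀ x, ‖(adjoint A).toLinearMap x‖ ≤ 1 * ‖e x‖ := fun x => by
    rw [one_mul]; exact hle x
  let E : S →L[ℂ] H := (adjoint A).toLinearMap.extendOfNorm e
  have hE : ‖E‖ ≤ 1 := LinearMap.opNorm_extendOfNorm_le he zero_le_one hbound
  have hC : (E ∘L S.orthogonalProjectionOnto) ∘L adjoint B = adjoint A := by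
    ext x
    have h1 : S.orthogonalProjectionOnto (adjoint B x) = e x :=
      S.orthogonalProjectionOnto_mem_subspace_eq_self (e x)
    rw [comp_apply, comp_apply, h1]
    exact LinearMap.extendOfNorm_eq he ⟨1, hbound⟩ x
  refine ⟨adjoint (E ∘L S.orthogonalProjectionOnto), ?_, ?_⟩
  · rw [LinearIsometryEquiv.norm_map]
    exact (opNorm_comp_le _ _).trans
      (mul_le_one₀ hE (norm_nonneg _) S.orthogonalProjectionOnto_norm_le)
  · rw [← adjoint_adjoint A, ← hC, adjoint_comp, adjoint_adjoint]

lemma exists_sqrt_defect (G : H →L[ℂ] K) (hG : ‖G‖ ≤ 1) :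
    ∃ D : K →L[ℂ] K, D.IsPositive ∧ D ∘L D = 1 - G ∘L adjoint G := by
  have hpos : 0 ≤ 1 - G ∘L adjoint G := by
    rw [nonneg_iff_isPositive, isPositive_def']
    refine ⟨(IsSelfAdjoint.one _).sub (isPositive_self_comp_adjoint G).isSelfAdjoint, fun x => ?_⟩
    have hx : ‖adjoint G x‖ ≤ ‖x‖ :=
      (adjoint G).le_of_opNorm_le_of_le (by rwa [LinearIsometryEquiv.norm_map]) le_rfl |>.trans
        (one_mul _).le
    rw [reApplyInnerSelf_apply, sub_apply, inner_sub_left, map_sub, re_inner_comp_adjoint_self,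
      one_def, id_apply, inner_self_eq_norm_sq, sub_nonneg]
    gcongr
  exact ⟨CFC.sqrt (1 - G ∘L adjoint G), (nonneg_iff_isPositive _).1 (CFC.sqrt_nonneg _),
    CFC.sqrt_mul_sqrt_self _ hpos⟩

end Douglas

section Parameters

variable {n : ℕ}

/-- The ordered product `D 0 * ⋯ * D (m - 1)`; for `m ≥ n` it is the product of all the `D i`. -/
def prefixProd {M : Type*} [Monoid M] (D : Fin n → M) (m : ℕ) : M :=
  (((List.finRange n).take m).map D).prod

lemma prefixProd_zero {M : Type*} [Monoid M] (D : Fin n → M) : prefixProd D 0 = 1 := by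
  simp [prefixProd]

lemma prefixProd_succ {M : Type*} [Monoid M] (D : Fin n → M) {m : ℕ} (hm : m < n) :
    prefixProd D (m + 1) = prefixProd D m * D ⟨m, hm⟩ := by
  have hl : m < (List.finRange n).length := by simpa using hm
  rw [prefixProd, List.take_succ_eq_append_getElem hl]
  simp [prefixProd]

lemma prefixProd_congr {M : Type*} [Monoid M] {D D' : Fin n → M} {m : ℕ} (hm : m ≤ n)
    (h : ∀ j : Fin n, (j : ℕ) < m → D j = D' j) : prefixProd D m = prefixProd D' m := by
  induction m with
  | zero => simp [prefixProd_zero]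
  | succ m ih =>
    rw [prefixProd_succ D hm, prefixProd_succ D' hm, h ⟨m, hm⟩ (Nat.lt_succ_self m),
      ih (Nat.le_of_succ_le hm) fun j hj => h j (hj.trans (Nat.lt_succ_self m))]

lemma sum_val_lt_succ {M : Type*} [AddCommMonoid M] (f : Fin n → M) {m : ℕ} (hm : m < n) :
    ∑ i with ((i : Fin n) : ℕ) < m + 1, f i = ∑ i with ((i : Fin n) : ℕ) < m, f i + f ⟨m, hm⟩ := by
  have h : (Finset.univ.filter fun i : Fin n => (i : ℕ) < m + 1) =
      insert ⟨m, hm⟩ (Finset.univ.filter fun i : Fin n => (i : ℕ) < m) := by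
    ext i
    simp only [Finset.mem_filter, Finset.mem_univ, true_and, Finset.mem_insert, Fin.ext_iff]
    omega
  rw [h, Finset.sum_insert (by simp), add_comm]

variable {K : Type*} {H : Fin n → Type*}
  [NormedAddCommGroup K] [InnerProductSpace ℂ K] [CompleteSpace K]
  [∀ i, NormedAddCommGroup (H i)] [∀ i, InnerProductSpace ℂ (H i)] [∀ i, CompleteSpace (H i)]

/-- The telescoping identity `P m ∘ (P m)† = 1 - ∑ k < m, T k ∘ (T k)†` for
`P m = D 0 ∘ ⋯ ∘ D (m - 1)`. -/
lemma prefixProd_mul_adjoint (T Γ : ∀ i, H i →L[ℂ] K) (D : Fin n → (K →L[ℂ] K))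
    (hD : ∀ i, (D i).IsPositive ∧ D i ∘L D i = 1 - Γ i ∘L adjoint (Γ i))
    {m : ℕ} (hm : m ≤ n) (hT : ∀ k : Fin n, (k : ℕ) < m → T k = prefixProd D k ∘L Γ k) :
    prefixProd D m ∘L adjoint (prefixProd D m) =
      1 - ∑ i with ((i : Fin n) : ℕ) < m, T i ∘L adjoint (T i) := by
  induction m with
  | zero => simp [prefixProd_zero, ← mul_def, ← star_eq_adjoint]
  | succ m ih =>
    have ih := ih (Nat.le_of_succ_le hm) fun k hk => hT k (hk.trans (Nat.lt_succ_self m))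
    have hTm := hT ⟨m, hm⟩ (Nat.lt_succ_self m)
    obtain ⟨hpos, hsq⟩ := hD ⟨m, hm⟩
    rw [sum_val_lt_succ _ hm, ← sub_sub, ← ih, hTm, prefixProd_succ D hm, mul_def, adjoint_comp,
      adjoint_comp, hpos.isSelfAdjoint.adjoint_eq]
    calc _ = prefixProd D m ∘L (D ⟨m, hm⟩ ∘L D ⟨m, hm⟩) ∘L adjoint (prefixProd D m) := rfl
      _ = _ := by
        rw [hsq, sub_comp, comp_sub]
        rfl

/-- Existence of the first `m` parameters. All `n` entries of `Γ` and `D` are contractions and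
their defect operators, but only the first `m` of them are tied to `T`. -/
lemma exists_parameters (T : ∀ i, H i →L[ℂ] K)
    (h : (1 - ∑ i, T i ∘L adjoint (T i)).IsPositive) {m : ℕ} (hm : m ≤ n) :
    ∃ Γ : ∀ i, H i →L[ℂ] K, (∀ i, ‖Γ i‖ ≤ 1) ∧ ∃ D : Fin n → (K →L[ℂ] K),
      (∀ i, (D i).IsPositive ∧ D i ∘L D i = 1 - Γ i ∘L adjoint (Γ i)) ∧
      ∀ k : Fin n, (k : ℕ) < m → T k = prefixProd D k ∘L Γ k := by
  induction m with
  | zero =>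
    refine ⟨fun _ => 0, by simp, fun _ => 1, fun _ => ⟨isPositive_one, by simp [one_def]⟩, ?_⟩
    simp
  | succ m ih =>
    obtain ⟨Γ, hΓ, D, hD, hT⟩ := ih (Nat.le_of_succ_le hm)
    have hP := prefixProd_mul_adjoint T Γ D hD (Nat.le_of_succ_le hm) hT
    have hle : (prefixProd D m ∘L adjoint (prefixProd D m) -
        T ⟨m, hm⟩ ∘L adjoint (T ⟨m, hm⟩)).IsPositive := by
      rw [hP, sub_sub, ← sum_val_lt_succ (fun i => T i ∘L adjoint (T i)) hm]
      have hsplit := Finset.sum_filter_add_sum_filter_not Finset.univ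
        (fun i : Fin n => (i : ℕ) < m + 1) (fun i => T i ∘L adjoint (T i))
      have hadd := h.add (isPositive_sum
        (Finset.univ.filter fun i : Fin n => ¬ (i : ℕ) < m + 1)
        fun i _ => isPositive_self_comp_adjoint (T i))
      rw [← hsplit] at hadd
      convert hadd using 1
      abel
    obtain ⟨G, hG, hTG⟩ := exists_contraction_factor _ _ hle
    obtain ⟨R, hR⟩ := exists_sqrt_defect G hG
    have hupd : ∀ k : ℕ, k ≤ m →
        prefixProd (Function.update D ⟨m, hm⟩ R) k = prefixProd D k := fun k hk =>
      prefixProd_congr (by omega) fun j hj =>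
        Function.update_of_ne (fun hjm => by rw [hjm] at hj; simp at hj; omega) _ _
    refine ⟨Function.update Γ ⟨m, hm⟩ G, fun i => ?_, Function.update D ⟨m, hm⟩ R,
      fun i => ?_, fun k hk => ?_⟩
    · rcases eq_or_ne i ⟨m, hm⟩ with rfl | hi
      · simpa using hG
      · simpa [hi] using hΓ i
    · rcases eq_or_ne i ⟨m, hm⟩ with rfl | hi
      · simpa using hR
      · simpa [hi] using hD i
    · rw [hupd k (Nat.lt_succ_iff.1 hk)]
      rcases eq_or_ne k ⟨m, hm⟩ with rfl | hi
      · simpa using hTG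
      · have hkm : (k : ℕ) < m :=
          lt_of_le_of_ne (Nat.lt_succ_iff.1 hk) fun hkm => hi (Fin.ext hkm)
        simpa [hi] using hT k hkm

end Parameters

theorem row_contraction_parametrization
    {n : ℕ} {K : Type*} {H : Fin n → Type*}
    [NormedAddCommGroup K] [InnerProductSpace ℂ K] [CompleteSpace K]
    [∀ i, NormedAddCommGroup (H i)] [∀ i, InnerProductSpace ℂ (H i)]
    [∀ i, CompleteSpace (H i)]
    (T : ∀ i, H i →L[ℂ] K) :
    (1 - ∑ i, T i ∘L ContinuousLinearMap.adjoint (T i)).IsPositive ↔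
      ∃ Γ : ∀ i, H i →L[ℂ] K, (∀ i, ‖Γ i‖ ≤ 1) ∧
        ∃ D : Fin n → (K →L[ℂ] K),
          (∀ i, (D i).IsPositive ∧
            D i ∘L D i = 1 - Γ i ∘L ContinuousLinearMap.adjoint (Γ i)) ∧
          ∀ k : Fin n,
            T k = (((List.finRange n).take (k : ℕ)).map D).prod ∘L Γ k := by
  constructor
  · intro h
    obtain ⟨Γ, hΓ, D, hD, hT⟩ := exists_parameters T h le_rfl
    exact ⟨Γ, hΓ, D, hD, fun k => hT k k.2⟩
  · rintro ⟨Γ, -, D, hD, hT⟩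
    have hP := prefixProd_mul_adjoint T Γ D hD le_rfl fun k _ => hT k
    rw [Finset.filter_true_of_mem fun i _ => i.2] at hP
    rw [← hP]
    exact isPositive_self_comp_adjoint _
end

section
/- Let m ≥ 1, let T, R : Matrix (Fin n) (Fin n) ℂ and S : Fin m → Matrix (Fin n) (Fin n) ℂ, and let A be the (m+1)×(m+1) block matrix with blocks (for i, j : Fin (m+1), writing the first index as 0): A 0 0 = T, A j j = R for j ≠ 0, A 0 j = S j and A j 0 = S j for j ≠ 0, and A i j = 0 for all other i ≠ j. If A (as a matrix on Fin (m+1) × Fin n) is positive semidefinite, then for every positive linear map Φ : Matrix (Fin n) (Fin n) ℂ →ₗ[ℂ] Matrix (Fin p) (Fin p) ℂ, the block matrix with (i,j) block Φ(A i j) is positive semidefinite. -/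
/-!
The point is that a positive semidefinite arrow matrix is separable, i.e. a limit of sums of
tensors `c ⊗ P` with `c`, `P` positive semidefinite; the map `id ⊗ Φ` sends such a tensor to
`c ⊗ Φ P`, which is again positive semidefinite.

Replacing `A` by `A + ε I` (and letting `ε → 0` at the end, `posSemidef_of_forall_add_smul`) we may
take `R` positive definite. Every `S j` is Hermitian because `A` is. Diagonalising
`R^{-1/2} S j R^{-1/2}` (with `R = Cᴴ C` in the role of the square root) yields real numbers `d l`
and positive semidefinite `P l` with `R = ∑ P l`, `S j = ∑ d l P l` and
`S j R⁻¹ S j = ∑ (d l)² P l` (`exists_simultaneous_decomposition`). So the block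
`[[S j R⁻¹ S j, S j], [S j, R]]` at positions `0` and `j` is `∑ c cᴴ ⊗ P l` with `c = (d l, 1)`.
Summing over `j` leaves only the Schur complement `T - ∑ S j R⁻¹ S j` in the corner, which is
positive semidefinite (`arrow_schur`).
-/

open Matrix
open scoped ComplexOrder

open scoped MatrixOrder in
/-- Simultaneous diagonalisation by congruence of a positive definite `R` and a Hermitian `S`,
written as expansions along common (rank one) positive semidefinite matrices `P l`. -/
theorem exists_simultaneous_decomposition {n : ℕ} {R S : Matrix (Fin n) (Fin n) ℂ}
    (hR : R.PosDef) (hS : S.IsHermitian) :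
    ∃ (d : Fin n → ℝ) (P : Fin n → Matrix (Fin n) (Fin n) ℂ),
      (∀ l, (P l).PosSemidef) ∧ R = ∑ l, P l ∧ S = ∑ l, (d l : ℂ) • P l ∧
      S * R⁻¹ * S = ∑ l, ((d l : ℂ) * d l) • P l := by
  obtain ⟨C, hC⟩ := CStarAlgebra.nonneg_iff_eq_star_mul_self.mp hR.posSemidef.nonneg
  rw [star_eq_conjTranspose] at hC
  have hRdet : IsUnit R.det := (Matrix.isUnit_iff_isUnit_det _).1 hR.isUnit
  have hCdet : IsUnit C.det := by
    rw [hC, det_mul] at hRdet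
    exact isUnit_of_mul_isUnit_right hRdet
  have hCdet' : IsUnit Cᴴ.det := by
    rw [det_conjTranspose]; exact hCdet.star
  have hH : ((C⁻¹)ᴴ * S * C⁻¹).IsHermitian := isHermitian_conjTranspose_mul_mul _ hS
  -- With `V = Cᴴ * U` one has `R = V * Vᴴ` and `S = V * diagonal d * Vᴴ`.
  set U : Matrix (Fin n) (Fin n) ℂ := (hH.eigenvectorUnitary : Matrix (Fin n) (Fin n) ℂ) with hU
  set d := hH.eigenvalues with hd
  have hUU : U * Uᴴ = 1 := by
    simpa [hU, star_eq_conjTranspose] using Unitary.coe_mul_star_self hH.eigenvectorUnitary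
  have hUU' : Uᴴ * U = 1 := by
    simpa [hU, star_eq_conjTranspose] using Unitary.coe_star_mul_self hH.eigenvectorUnitary
  have hspec : (C⁻¹)ᴴ * S * C⁻¹ = U * diagonal (fun l => (d l : ℂ)) * Uᴴ := by
    have := hH.spectral_theorem
    rw [Unitary.conjStarAlgAut_apply] at this
    exact this
  have hsum : ∀ e : Fin n → ℂ, (Cᴴ * U) * diagonal e * (Cᴴ * U)ᴴ =
      ∑ l, e l • ((Cᴴ * U) * diagonal (Pi.single l 1) * (Cᴴ * U)ᴴ) := by
    intro e
    have : diagonal e = ∑ l, e l • diagonal (Pi.single l (1 : ℂ)) := by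
      ext i j
      by_cases hij : i = j
      · subst hij
        simp [Matrix.sum_apply, Pi.single_apply]
      · simp [Matrix.sum_apply, hij]
    conv_lhs => rw [this]
    simp only [Matrix.mul_sum, Matrix.sum_mul, Matrix.mul_smul, Matrix.smul_mul]
  have hRV : R = (Cᴴ * U) * (Cᴴ * U)ᴴ := by
    rw [conjTranspose_mul, conjTranspose_conjTranspose, Matrix.mul_assoc, ← Matrix.mul_assoc U,
      hUU, Matrix.one_mul, hC]
  have hSV : S = (Cᴴ * U) * diagonal (fun l => (d l : ℂ)) * (Cᴴ * U)ᴴ := by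
    calc S = Cᴴ * ((C⁻¹)ᴴ * S * C⁻¹) * C := by
          rw [conjTranspose_nonsing_inv, Matrix.mul_assoc, Matrix.mul_assoc,
            Matrix.nonsing_inv_mul _ hCdet, Matrix.mul_one, ← Matrix.mul_assoc,
            Matrix.mul_nonsing_inv _ hCdet', Matrix.one_mul]
      _ = _ := by
          rw [hspec, conjTranspose_mul, conjTranspose_conjTranspose]
          simp only [Matrix.mul_assoc]
  have hmid : (Cᴴ * U)ᴴ * R⁻¹ * (Cᴴ * U) = 1 := by
    rw [hC, Matrix.mul_inv_rev, conjTranspose_mul, conjTranspose_conjTranspose]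
    calc Uᴴ * C * (C⁻¹ * (Cᴴ)⁻¹) * (Cᴴ * U) = Uᴴ * ((C * C⁻¹) * ((Cᴴ)⁻¹ * Cᴴ)) * U := by
          simp only [Matrix.mul_assoc]
      _ = 1 := by
          rw [Matrix.mul_nonsing_inv _ hCdet, Matrix.nonsing_inv_mul _ hCdet', Matrix.one_mul,
            Matrix.mul_one, hUU']
  refine ⟨d, fun l => (Cᴴ * U) * diagonal (Pi.single l 1) * (Cᴴ * U)ᴴ, fun l => ?_, ?_, ?_, ?_⟩
  · refine (PosSemidef.diagonal fun i => ?_).mul_mul_conjTranspose_same _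
    by_cases h : i = l
    · subst h; simp
    · simp [h]
  · have := hsum 1
    rw [Pi.one_def, diagonal_one, Matrix.mul_one, ← hRV] at this
    simpa only [one_smul] using this
  · rw [← hsum]; exact hSV
  · rw [← hsum, ← diagonal_mul_diagonal]
    generalize diagonal (fun l => (d l : ℂ)) = D at *
    generalize Cᴴ * U = V at *
    generalize R⁻¹ = Q at *
    calc S * Q * S = V * D * (Vᴴ * Q * V) * D * Vᴴ := by
          rw [hSV]; simp only [Matrix.mul_assoc]
      _ = _ := by rw [hmid]; simp only [Matrix.mul_assoc, Matrix.mul_one]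

/-- The matrix on `ι × κ` whose `(i, j)` block is `A i j`. -/
def blockMat {ι κ : Type*} (A : ι → ι → Matrix κ κ ℂ) : Matrix (ι × κ) (ι × κ) ℂ :=
  Matrix.of fun u v => A u.1 v.1 u.2 v.2

theorem posSemidef_of_forall_add_smul {κ : Type*} [Fintype κ] {M N : Matrix κ κ ℂ}
    (hN : N.PosSemidef) (h : ∀ ε : ℝ, 0 < ε → (M + (ε : ℂ) • N).PosSemidef) : M.PosSemidef := by
  have hM : M.IsHermitian := by
    have := (h 1 one_pos).1.sub hN.1
    simpa using this
  refine .of_dotProduct_mulVec_nonneg hM fun x => ?_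
  have hlim : Filter.Tendsto
      (fun ε : ℝ => star x ⬝ᵥ M *ᵥ x + (ε : ℂ) * (star x ⬝ᵥ N *ᵥ x))
      (nhdsWithin 0 (Set.Ioi 0)) (nhds (star x ⬝ᵥ M *ᵥ x)) := by
    have hc : Continuous
        (fun ε : ℝ => star x ⬝ᵥ M *ᵥ x + (ε : ℂ) * (star x ⬝ᵥ N *ᵥ x)) := by fun_prop
    simpa using (hc.tendsto 0).mono_left nhdsWithin_le_nhds
  refine ge_of_tendsto hlim ?_
  filter_upwards [self_mem_nhdsWithin] with ε hε
  have := (h ε hε).dotProduct_mulVec_nonneg x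
  simpa [add_mulVec, smul_mulVec, dotProduct_add, dotProduct_smul] using this

/-- A congruence of a block matrix by a single block column `B`. -/
theorem PosSemidef.sum_block_congr {ι κ : Type*} [Fintype ι] [Fintype κ]
    {A : ι → ι → Matrix κ κ ℂ} (hA : (blockMat A).PosSemidef) (B : ι → Matrix κ κ ℂ) :
    (∑ i, ∑ j, (B i)ᴴ * A i j * B j).PosSemidef := by
  have := hA.conjTranspose_mul_mul_same (Matrix.of fun (u : ι × κ) b => B u.1 u.2 b)
  convert this using 1
  ext a b
  simp only [Matrix.sum_apply, Matrix.mul_apply, blockMat, Fintype.sum_prod_type,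
    conjTranspose_apply, Matrix.of_apply, Finset.sum_mul]
  rw [Finset.sum_comm]
  refine Finset.sum_congr rfl fun j _ => ?_
  rw [Finset.sum_comm]

/-- The blocks of the arrow matrix: `T` in the corner, `R` along the rest of the diagonal, the `S j`
along the first row and the first column, and `0` elsewhere. -/
def arrow {n m : ℕ} (T R : Matrix (Fin n) (Fin n) ℂ) (S : Fin m → Matrix (Fin n) (Fin n) ℂ) :
    Fin (m + 1) → Fin (m + 1) → Matrix (Fin n) (Fin n) ℂ := fun i j =>
  if h : i = 0 then
    (if h' : j = 0 then T else S (j.pred h'))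
  else if h' : j = 0 then S (i.pred h)
  else if i = j then R else 0

section arrow
variable {n m : ℕ} (T R : Matrix (Fin n) (Fin n) ℂ) (S : Fin m → Matrix (Fin n) (Fin n) ℂ)

@[simp] theorem arrow_zero_zero : arrow T R S 0 0 = T := by simp [arrow]
@[simp] theorem arrow_zero_succ (j : Fin m) : arrow T R S 0 j.succ = S j := by
  simp [arrow]
@[simp] theorem arrow_succ_zero (j : Fin m) : arrow T R S j.succ 0 = S j := by
  simp [arrow]
@[simp] theorem arrow_succ_succ (i j : Fin m) :
    arrow T R S i.succ j.succ = if i = j then R else 0 := by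
  simp [arrow]

variable {T R S}

/-- Blocks `(0, j)` and `(j, 0)` of an arrow matrix agree, so self-adjointness passes to `S j`. -/
theorem arrow_isHermitian (h : (blockMat (arrow T R S)).PosSemidef) (j : Fin m) :
    (S j).IsHermitian := by
  ext a b
  have := congrFun (congrFun h.1 (0, a)) (j.succ, b)
  simpa [blockMat, conjTranspose_apply] using this

/-- The Schur complement `T - ∑ S j R⁻¹ S j` of an arrow matrix. -/
theorem arrow_schur (hR : R.PosDef) (h : (blockMat (arrow T R S)).PosSemidef) :
    (T - ∑ j, S j * R⁻¹ * S j).PosSemidef := by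
  have hRdet : IsUnit R.det := (Matrix.isUnit_iff_isUnit_det _).1 hR.isUnit
  have hS := arrow_isHermitian h
  -- Congruence by the block column with entry `1` at index `0` and `-R⁻¹ S j` at index `j + 1`.
  have := PosSemidef.sum_block_congr h (Fin.cons 1 fun j => -(R⁻¹ * S j))
  convert this using 1
  have hRi : (R⁻¹)ᴴ = R⁻¹ := hR.1.inv
  have hcancel : ∀ X : Matrix (Fin n) (Fin n) ℂ, R⁻¹ * (R * X) = X := fun X => by
    rw [← Matrix.mul_assoc, Matrix.nonsing_inv_mul _ hRdet, Matrix.one_mul]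
  simp only [Fin.sum_univ_succ, Fin.cons_zero, Fin.cons_succ, arrow_zero_zero, arrow_zero_succ,
    arrow_succ_zero, arrow_succ_succ, conjTranspose_one, conjTranspose_neg, conjTranspose_mul,
    (hS _).eq, hRi, mul_ite, ite_mul, Matrix.mul_zero, Matrix.zero_mul, Finset.sum_ite_eq,
    Finset.mem_univ, if_true, Matrix.one_mul, Matrix.mul_one, Matrix.neg_mul, Matrix.mul_neg,
    Matrix.mul_assoc, hcancel, Finset.sum_add_distrib, Finset.sum_neg_distrib]
  abel

end arrow

section positive
variable {n p : ℕ} {Φ : Matrix (Fin n) (Fin n) ℂ →ₗ[ℂ] Matrix (Fin p) (Fin p) ℂ}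

/-- `id ⊗ Φ` sends a simple tensor of positive semidefinite matrices to `c ⊗ Φ P`. -/
theorem posSemidef_map_simple {ι : Type*} [Finite ι]
    (hΦ : ∀ M : Matrix (Fin n) (Fin n) ℂ, M.PosSemidef → (Φ M).PosSemidef)
    {c : Matrix ι ι ℂ} (hc : c.PosSemidef) {P : Matrix (Fin n) (Fin n) ℂ} (hP : P.PosSemidef) :
    (blockMat fun i j => Φ (c i j • P)).PosSemidef := by
  have hblock : (blockMat fun i j => Φ (c i j • P)) =
      Matrix.kroneckerMap (fun x y => x * y) c (Φ P) := by
    ext u v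
    simp [blockMat, Matrix.kroneckerMap_apply]
  rw [hblock]
  exact hc.kronecker (hΦ P hP)

/-- The case of positive definite `R`, where the arrow matrix is a finite sum of simple tensors. -/
theorem arrow_map_of_posDef {m : ℕ} {T R : Matrix (Fin n) (Fin n) ℂ}
    {S : Fin m → Matrix (Fin n) (Fin n) ℂ}
    (hΦ : ∀ M : Matrix (Fin n) (Fin n) ℂ, M.PosSemidef → (Φ M).PosSemidef)
    (hR : R.PosDef) (h : (blockMat (arrow T R S)).PosSemidef) :
    (blockMat fun i j => Φ (arrow T R S i j)).PosSemidef := by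
  have hS := arrow_isHermitian h
  choose d P hP hRP hSP hSS using fun j => exists_simultaneous_decomposition hR (hS j)
  -- `c k l` is `d k l` at index `0` and `1` at index `k + 1`; `e` is the first basis vector.
  let c : Fin m → Fin n → Fin (m + 1) → ℂ := fun k l => Fin.cons (d k l : ℂ) (Pi.single k 1)
  let e : Fin (m + 1) → ℂ := Fin.cons 1 0
  have hdec : ∀ i j, arrow T R S i j =
      vecMulVec e (star e) i j • (T - ∑ j, S j * R⁻¹ * S j) +
        ∑ k, ∑ l, vecMulVec (c k l) (star (c k l)) i j • P k l := by
    intro i j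
    refine Fin.cases ?_ (fun i => ?_) i <;> refine Fin.cases ?_ (fun j => ?_) j
    · simp [e, c, vecMulVec_apply, hSS]
    · rw [show vecMulVec e (star e) 0 j.succ = 0 by simp [e, vecMulVec_apply], zero_smul, zero_add,
        Finset.sum_eq_single j (fun k _ hk => by simp [c, vecMulVec_apply, hk.symm])
        (by simp)]
      simpa [e, c, vecMulVec_apply] using hSP j
    · rw [show vecMulVec e (star e) i.succ 0 = 0 by simp [e, vecMulVec_apply], zero_smul, zero_add,
        Finset.sum_eq_single i (fun k _ hk => by simp [c, vecMulVec_apply, hk.symm])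
        (by simp)]
      simpa [e, c, vecMulVec_apply] using hSP i
    · rw [show vecMulVec e (star e) i.succ j.succ = 0 by simp [e, vecMulVec_apply], zero_smul,
        zero_add, Finset.sum_eq_single i (fun k _ hk => by simp [c, vecMulVec_apply, hk.symm])
        (by simp)]
      by_cases hij : i = j
      · subst hij
        simpa [e, c, vecMulVec_apply] using hRP i
      · simp [c, vecMulVec_apply, hij, Ne.symm hij]
  have hsum : (blockMat fun i j => Φ (arrow T R S i j)) =
      (blockMat fun i j => Φ (vecMulVec e (star e) i j • (T - ∑ j, S j * R⁻¹ * S j))) +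
        ∑ k, ∑ l, blockMat fun i j => Φ (vecMulVec (c k l) (star (c k l)) i j • P k l) := by
    ext u v
    simp only [blockMat, Matrix.of_apply, Matrix.add_apply, Matrix.sum_apply]
    rw [hdec]
    simp only [map_add, map_sum, Matrix.add_apply, Matrix.sum_apply]
  rw [hsum]
  refine (posSemidef_map_simple hΦ (posSemidef_vecMulVec_self_star e) (arrow_schur hR h)).add ?_
  exact posSemidef_sum _ fun k _ => posSemidef_sum _ fun l _ =>
    posSemidef_map_simple hΦ (posSemidef_vecMulVec_self_star (c k l)) (hP k l)

end positive

theorem positive_map_on_arrow_matrices_first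
    {n m : ℕ} (hm : 1 ≤ m)
    (T R : Matrix (Fin n) (Fin n) ℂ) (S : Fin m → Matrix (Fin n) (Fin n) ℂ)
    (A : Fin (m + 1) → Fin (m + 1) → Matrix (Fin n) (Fin n) ℂ)
    (hA : A = fun i j =>
      if h : i = 0 then
        (if h' : j = 0 then T else S (j.pred h'))
      else if h' : j = 0 then S (i.pred h)
      else if i = j then R else 0)
    (hpos : (Matrix.of fun (p q : Fin (m + 1) × Fin n) => A p.1 q.1 p.2 q.2).PosSemidef) :
    ∀ (p : ℕ) (Φ : Matrix (Fin n) (Fin n) ℂ →ₗ[ℂ] Matrix (Fin p) (Fin p) ℂ),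
      (∀ M : Matrix (Fin n) (Fin n) ℂ, M.PosSemidef → (Φ M).PosSemidef) →
      (Matrix.of fun (u v : Fin (m + 1) × Fin p) => Φ (A u.1 v.1) u.2 v.2).PosSemidef := by
  intro p Φ hΦ
  have hA' : A = arrow T R S := hA
  subst hA'
  change (blockMat (arrow T R S)).PosSemidef at hpos
  change (blockMat fun i j => Φ (arrow T R S i j)).PosSemidef
  have hone : (1 : Matrix (Fin (m + 1)) (Fin (m + 1)) ℂ).PosSemidef := PosSemidef.one
  -- `R` occurs as a diagonal block because `1 ≤ m`.
  have hR : R.PosSemidef := by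
    convert hpos.submatrix (fun a : Fin n => ((⟨0, hm⟩ : Fin m).succ, a)) using 1
    ext a b
    simp only [blockMat, Matrix.submatrix_apply, Matrix.of_apply, arrow_succ_succ, if_true]
  have harrow : ∀ (ε : ℂ) i j, arrow (T + ε • 1) (R + ε • 1) S i j =
      arrow T R S i j + ε • ((1 : Matrix (Fin (m + 1)) (Fin (m + 1)) ℂ) i j • 1) := by
    intro ε i j
    refine Fin.cases ?_ (fun i => ?_) i <;> refine Fin.cases ?_ (fun j => ?_) j
    · simp
    · simp [(Fin.succ_ne_zero j).symm]
    · simp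
    · by_cases hij : i = j <;> simp [Matrix.one_apply, hij]
  -- Used for `Ψ = Φ` and for `Ψ = id`.
  have key : ∀ {q : ℕ} (Ψ : Matrix (Fin n) (Fin n) ℂ →ₗ[ℂ] Matrix (Fin q) (Fin q) ℂ) (ε : ℂ),
      (blockMat fun i j => Ψ (arrow (T + ε • 1) (R + ε • 1) S i j)) =
      (blockMat fun i j => Ψ (arrow T R S i j)) +
        ε • blockMat fun i j => Ψ ((1 : Matrix (Fin (m + 1)) (Fin (m + 1)) ℂ) i j • 1) := by
    intro q Ψ ε
    ext u v
    simp only [blockMat, Matrix.of_apply, Matrix.add_apply, Matrix.smul_apply]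
    rw [harrow, map_add, map_smul Ψ ε, Matrix.add_apply, Matrix.smul_apply]
  refine posSemidef_of_forall_add_smul (posSemidef_map_simple hΦ hone PosSemidef.one)
    fun ε hε => ?_
  have hε' : (0 : ℂ) < (ε : ℂ) := by exact_mod_cast hε
  rw [← key Φ]
  refine arrow_map_of_posDef hΦ (PosDef.posSemidef_add hR (PosDef.one.smul hε')) ?_
  have := key LinearMap.id ε
  simp only [LinearMap.id_apply] at this
  change (blockMat fun i j => arrow _ _ S i j).PosSemidef
  rw [this]
  exact hpos.add ((posSemidef_map_simple (Φ := LinearMap.id) (fun M hM => hM) hone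
    PosSemidef.one).smul hε'.le)
end
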